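/- Let k be a field, q ∈ k and n ≥ 1 an integer such that (m)_q ≠ 0 for all 1 ≤ m ≤ n. Let A be a unital associative k-algebra and x, y, h ∈ A with x·y = q·y·x + h, x·h = q²·h·x and h·y = q²·y·h. Then (x+y)^n = Σ_{r+2s+t=n} ((n)_q! / ((r)_q!·(2)_q^s·(s)_{q²}!·(t)_q!)) · y^r·h^s·x^t, the sum being over all (r, s, t) ∈ ℕ³ with r + 2s + t = n (under the hypothesis on q all the denominators are nonzero elements of k). -/

import Mathlib

/-- The q-integer `(m)_q = 1 + q + ⋯ + q^{m−1}`. -/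
def qInt {k : Type*} [CommRing k] (q : k) (m : ℕ) : k := ∑ i ∈ Finset.range m, q ^ i

/-- The q-factorial `(m)_q! = (1)_q (2)_q ⋯ (m)_q`. -/
def qFact {k : Type*} [CommRing k] (q : k) : ℕ → k
  | 0 => 1
  | m + 1 => qFact q m * qInt q (m + 1)

/-!
Let `H u` be the `q`-Gaussian moments of variance `h`: `H 0 = 1`, `H 1 = 0` and
`H (u + 2) = (u + 1)_q h H u`. The elements `P m = ∑_{r+u=m} [m choose r]_q y^r H u` satisfy
`(x + y) P m = P (m + 1) + q^m P m x`: the correction term in `x y^r = q^r y^r x + ⋯` is exactly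
what turns `y P m` into `P (m + 1)`. Pascal's rule then gives
`(x + y)^n = ∑_{m+t=n} [n choose m]_q P m x^t` over any commutative ring, for every `q`. Since
`H (2s) = (1)_q (3)_q ⋯ (2s-1)_q h^s` and the odd moments vanish, it only remains to write the
coefficients as quotients of `q`-factorials.
-/

section QAnalogues

variable {k : Type*} [CommRing k] (q : k)

@[simp] lemma qInt_zero : qInt q 0 = 0 := by simp [qInt]

@[simp] lemma qInt_one : qInt q 1 = 1 := by simp [qInt]

lemma qInt_add (a b : ℕ) : qInt q (a + b) = qInt q a + q ^ a * qInt q b := by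
  simp only [qInt, Finset.sum_range_add, Finset.mul_sum, pow_add]

lemma qInt_succ (m : ℕ) : qInt q (m + 1) = qInt q m + q ^ m := by
  rw [qInt_add, qInt_one, mul_one]

lemma qInt_succ' (m : ℕ) : qInt q (m + 1) = 1 + q * qInt q m := by
  rw [add_comm, qInt_add, qInt_one, pow_one]

lemma qInt_two_mul (s : ℕ) : qInt q (2 * s) = qInt q 2 * qInt (q ^ 2) s := by
  induction s with
  | zero => simp
  | succ s ih =>
    rw [mul_add_one, qInt_add, ih, qInt_succ (q ^ 2)]
    ring

lemma qFact_succ (m : ℕ) : qFact q (m + 1) = qFact q m * qInt q (m + 1) := rfl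

/-- The Gaussian binomial coefficient `[n choose m]_q`, defined by Pascal's rule so that it makes
sense for every `q` in a commutative ring. -/
def qChoose : ℕ → ℕ → k
  | _, 0 => 1
  | 0, _ + 1 => 0
  | n + 1, m + 1 => qChoose n m + q ^ (m + 1) * qChoose n (m + 1)

@[simp] lemma qChoose_zero_right (n : ℕ) : qChoose q n 0 = 1 := by cases n <;> rfl

lemma qChoose_succ_succ (n m : ℕ) :
    qChoose q (n + 1) (m + 1) = qChoose q n m + q ^ (m + 1) * qChoose q n (m + 1) := rfl

lemma qChoose_eq_zero_of_lt {n m : ℕ} (hnm : n < m) : qChoose q n m = 0 := by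
  induction n generalizing m with
  | zero => cases m with
    | zero => omega
    | succ m => rfl
  | succ n ih => cases m with
    | zero => omega
    | succ m => rw [qChoose_succ_succ, ih (by omega), ih (by omega), mul_zero, add_zero]

@[simp] lemma qChoose_self (n : ℕ) : qChoose q n n = 1 := by
  induction n with
  | zero => rfl
  | succ n ih => rw [qChoose_succ_succ, ih, qChoose_eq_zero_of_lt q n.lt_succ_self, mul_zero,
      add_zero]

lemma qInt_succ_mul_qChoose_succ_succ (n m : ℕ) :
    qInt q (m + 1) * qChoose q (n + 1) (m + 1) = qInt q (n + 1) * qChoose q n m := by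
  induction n generalizing m with
  | zero => cases m <;> simp [qChoose]
  | succ n ih => cases m with
    | zero =>
      have h₀ := ih 0
      simp only [zero_add, qInt_one, one_mul, qChoose_zero_right, mul_one] at h₀
      simp [qChoose_succ_succ q (n + 1), h₀, ← qInt_succ']
    | succ m =>
      rw [qChoose_succ_succ q (n + 1), qInt_succ' q (n + 1)]
      linear_combination qChoose q (n + 1) (m + 1) * qInt_succ' q (m + 1) +
        q * ih m + q ^ (m + 2) * ih (m + 1) - q * qInt q (n + 1) * qChoose_succ_succ q n m

lemma qInt_succ_mul_qChoose_add_succ (r u : ℕ) :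
    qInt q (u + 1) * qChoose q (r + u + 1) r = qInt q (r + u + 1) * qChoose q (r + u) r := by
  induction r generalizing u with
  | zero => simp
  | succ r ihr =>
    induction u with
    | zero =>
      have h₀ := ihr 0
      simp only [zero_add, add_zero, qInt_one, one_mul, qChoose_self, mul_one] at h₀
      simp [qChoose_succ_succ q (r + 1), h₀, ← qInt_succ]
    | succ u ihu =>
      rw [Nat.add_right_comm r 1 u] at ihu
      rw [show r + 1 + (u + 1) = r + u + 2 by ring]
      linear_combination qInt q (u + 2) * qChoose_succ_succ q (r + u + 2) r + ihr (u + 1) +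
        q ^ (r + 1) * qChoose q (r + u + 2) (r + 1) * qInt_succ q (u + 1) + q ^ (r + 1) * ihu -
        qInt q (r + u + 2) * qChoose_succ_succ q (r + u + 1) r -
        qChoose q (r + u + 2) (r + 1) * qInt_succ q (r + u + 2)

lemma qChoose_mul_qFact_mul_qFact (m t : ℕ) :
    qChoose q (m + t) m * (qFact q m * qFact q t) = qFact q (m + t) := by
  induction m with
  | zero => simp [qFact]
  | succ m ih =>
    rw [Nat.add_right_comm, qFact_succ, qFact_succ, ← ih]
    linear_combination qFact q m * qFact q t * qInt_succ_mul_qChoose_succ_succ q (m + t) m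

/-- The product `(1)_q (3)_q ⋯ (2s-1)_q`, the `q`-analogue of the double factorial `(2s-1)‼`. -/
def qOddFact (s : ℕ) : k := ∏ i ∈ Finset.range s, qInt q (2 * i + 1)

lemma qOddFact_succ (s : ℕ) : qOddFact q (s + 1) = qOddFact q s * qInt q (2 * s + 1) :=
  Finset.prod_range_succ _ s

lemma qOddFact_mul_qFact_sq (s : ℕ) :
    qOddFact q s * (qInt q 2 ^ s * qFact (q ^ 2) s) = qFact q (2 * s) := by
  induction s with
  | zero => simp [qOddFact, qFact]
  | succ s ih =>
    have even_factor : qInt q (2 * s + 2) = qInt q 2 * qInt (q ^ 2) (s + 1) :=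
      qInt_two_mul q (s + 1)
    rw [mul_add_one, qFact_succ q (2 * s + 1), qFact_succ q (2 * s), ← ih, even_factor,
      qOddFact_succ, qFact_succ]
    ring

/-- The coefficient of `y^r h^s x^t` in `(x + y)^(r+2s+t)`: the `q`-analogue of the number of ways
to split `r + 2s + t` points into `r` points, `t` points and a perfect matching of the rest. -/
def qPairingCoeff (r s t : ℕ) : k :=
  qChoose q (r + 2 * s + t) (r + 2 * s) * qChoose q (r + 2 * s) r * qOddFact q s

lemma qPairingCoeff_mul_eq_qFact (r s t : ℕ) :
    qPairingCoeff q r s t * (qFact q r * qInt q 2 ^ s * qFact (q ^ 2) s * qFact q t) =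
      qFact q (r + 2 * s + t) := by
  rw [← qChoose_mul_qFact_mul_qFact, ← qChoose_mul_qFact_mul_qFact q r, ← qOddFact_mul_qFact_sq,
    qPairingCoeff]
  ring

end QAnalogues

lemma qFact_ne_zero {k : Type*} [CommRing k] [IsDomain k] {q : k} {n : ℕ}
    (hq : ∀ m : ℕ, 1 ≤ m → m ≤ n → qInt q m ≠ 0) : qFact q n ≠ 0 := by
  induction n with
  | zero => exact one_ne_zero
  | succ n ih =>
    exact mul_ne_zero (ih fun m h₁ hm => hq m h₁ (by omega)) (hq (n + 1) (by omega) le_rfl)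

lemma qPairingCoeff_eq_div {k : Type*} [Field k] {q : k} {r s t : ℕ}
    (hfact : qFact q (r + 2 * s + t) ≠ 0) :
    qPairingCoeff q r s t = qFact q (r + 2 * s + t) /
      (qFact q r * qInt q 2 ^ s * qFact (q ^ 2) s * qFact q t) := by
  rw [← qPairingCoeff_mul_eq_qFact] at hfact ⊢
  exact (mul_div_cancel_right₀ _ (right_ne_zero_of_mul hfact)).symm

section Sums

open Finset

lemma sum_antidiagonal_qChoose_succ_smul {k M : Type*} [CommRing k] [AddCommMonoid M] [Module k M]
    (q : k) (f : ℕ → ℕ → M) (n : ℕ) :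
    ∑ p ∈ antidiagonal (n + 1), qChoose q (n + 1) p.1 • f p.1 p.2 =
      ∑ p ∈ antidiagonal n, qChoose q n p.1 • (f (p.1 + 1) p.2 + q ^ p.1 • f p.1 (p.2 + 1)) := by
  have shift : ∑ p ∈ antidiagonal n, qChoose q n p.1 • q ^ p.1 • f p.1 (p.2 + 1) =
      f 0 (n + 1) +
        ∑ p ∈ antidiagonal n, (q ^ (p.1 + 1) * qChoose q n (p.1 + 1)) • f (p.1 + 1) p.2 := by
    have split_last := Nat.sum_antidiagonal_succ' (n := n)
      (f := fun p => (q ^ p.1 * qChoose q n p.1) • f p.1 p.2)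
    rw [Nat.sum_antidiagonal_succ] at split_last
    simpa [qChoose_eq_zero_of_lt, smul_smul, mul_comm] using split_last.symm
  simp only [Nat.sum_antidiagonal_succ, qChoose_succ_succ, qChoose_zero_right, one_smul, add_smul,
    smul_add, sum_add_distrib, shift]
  exact add_left_comm _ _ _

lemma sum_antidiagonal_antidiagonal_eq_finsum_of_odd_eq_zero {M : Type*} [AddCommMonoid M]
    (n : ℕ) (g : ℕ → ℕ → ℕ → M) (hg : ∀ r s t, g r (2 * s + 1) t = 0) :
    ∑ p ∈ antidiagonal n, ∑ d ∈ antidiagonal p.1, g d.1 d.2 p.2 =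
      ∑ᶠ p ∈ {p : ℕ × ℕ × ℕ | p.1 + 2 * p.2.1 + p.2.2 = n}, g p.1 (2 * p.2.1) p.2.2 := by
  have finite_triples : {p : ℕ × ℕ × ℕ | p.1 + 2 * p.2.1 + p.2.2 = n}.Finite := by
    refine (Set.finite_Iic (n, n, n)).subset ?_
    rintro ⟨r, s, t⟩ rfl
    simp only [Set.mem_Iic, Prod.mk_le_mk]
    omega
  rw [finsum_mem_eq_finite_toFinset_sum _ finite_triples, sum_sigma']
  symm
  refine sum_of_injOn (fun p => ⟨(p.1 + 2 * p.2.1, p.2.2), (p.1, 2 * p.2.1)⟩) ?_ ?_ ?_ ?_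
  · rintro ⟨r, s, t⟩ - ⟨r', s', t'⟩ - heq
    simp only [Sigma.mk.injEq, Prod.mk.injEq, heq_eq_eq, mul_eq_mul_left_iff, OfNat.ofNat_ne_zero,
      or_false] at heq
    grind
  · rintro ⟨r, s, t⟩ hp
    simpa using hp
  · rintro ⟨⟨m, t⟩, r, u⟩ hmem hnot
    obtain ⟨s, rfl | rfl⟩ := u.even_or_odd'
    · simp only [mem_sigma, HasAntidiagonal.mem_antidiagonal] at hmem
      obtain ⟨hn, rfl⟩ := hmem
      exact absurd ⟨(r, s, t), by simpa using hn, rfl⟩ hnot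
    · exact hg r s t
  · intros; rfl

end Sums

section NormalOrdering

open Finset

variable {k A : Type*} [CommRing k] [Ring A] [Algebra k A]

lemma pow_eq_sum_qChoose_smul {q : k} {x z : A} {P : ℕ → A} (hP_zero : P 0 = 1)
    (hP_succ : ∀ m, z * P m = P (m + 1) + q ^ m • (P m * x)) (n : ℕ) :
    z ^ n = ∑ p ∈ antidiagonal n, qChoose q n p.1 • (P p.1 * x ^ p.2) := by
  induction n with
  | zero => simp [hP_zero]
  | succ n ih =>
    rw [sum_antidiagonal_qChoose_succ_smul q (fun m t => P m * x ^ t), pow_succ', ih, mul_sum]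
    refine sum_congr rfl fun p _ => ?_
    rw [mul_smul_comm, ← mul_assoc, hP_succ, add_mul, smul_mul_assoc, mul_assoc, ← pow_succ']

/-- At `r = 0` the truncated exponent `r - 1` is harmless because `(0)_q = 0`. -/
lemma mul_pow_eq_of_q_commute {q : k} {x y h : A} (hxy : x * y = q • (y * x) + h)
    (hhy : h * y = q ^ 2 • (y * h)) (r : ℕ) :
    x * y ^ r = q ^ r • (y ^ r * x) + (q ^ (r - 1) * qInt q r) • (y ^ (r - 1) * h) := by
  cases r with
  | zero => simp
  | succ r =>
    induction r with
    | zero => simp [hxy]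
    | succ r ih =>
      simp only [Nat.add_sub_cancel] at ih ⊢
      calc x * y ^ (r + 2)
          = q ^ (r + 1) • (y ^ (r + 1) * (x * y)) +
              (q ^ r * qInt q (r + 1)) • (y ^ r * (h * y)) := by
            rw [pow_succ y (r + 1), ← mul_assoc, ih, add_mul, smul_mul_assoc, smul_mul_assoc,
              mul_assoc, mul_assoc]
        _ = q ^ (r + 2) • (y ^ (r + 2) * x) +
              (q ^ (r + 1) * (1 + q * qInt q (r + 1))) • (y ^ (r + 1) * h) := by
            rw [hxy, hhy, pow_succ y (r + 1), pow_succ y r]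
            simp only [mul_add, mul_smul_comm, ← mul_assoc]
            module
        _ = _ := by rw [← qInt_succ']

/-- The moments of the `q`-Gaussian distribution of formal variance `h`: the odd ones vanish and the
`2s`-th one is `(1)_q (3)_q ⋯ (2s-1)_q h^s`. -/
def qMoment (q : k) (h : A) : ℕ → A
  | 0 => 1
  | 1 => 0
  | u + 2 => qInt q (u + 1) • (h * qMoment q h u)

lemma qMoment_two_mul (q : k) (h : A) (s : ℕ) :
    qMoment q h (2 * s) = qOddFact q s • h ^ s := by
  induction s with
  | zero => simp [qMoment, qOddFact]
  | succ s ih =>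
    rw [mul_add_one, qMoment, ih, mul_smul_comm, smul_smul, ← pow_succ', mul_comm,
      ← qOddFact_succ]

lemma qMoment_two_mul_add_one (q : k) (h : A) (s : ℕ) : qMoment q h (2 * s + 1) = 0 := by
  induction s with
  | zero => rfl
  | succ s ih => rw [mul_add_one, Nat.add_right_comm, qMoment, ih, mul_zero, smul_zero]

lemma mul_qMoment {q : k} {x h : A} (hxh : x * h = q ^ 2 • (h * x)) (u : ℕ) :
    x * qMoment q h u = q ^ u • (qMoment q h u * x) := by
  induction u using Nat.twoStepInduction with
  | zero => simp [qMoment]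
  | one => simp [qMoment]
  | more u ih _ =>
    rw [qMoment, mul_smul_comm, ← mul_assoc, hxh, smul_mul_assoc, mul_assoc, ih]
    simp only [mul_smul_comm, smul_mul_assoc, mul_assoc]
    module

/-- The two-variable `q`-Hermite polynomial `∑_{r+u=m} [m choose r]_q y^r H u`, where `H u` is the
`u`-th `q`-Gaussian moment of variance `h`; it collects the terms of the normally ordered powers of
`x + y` without their powers of `x`. -/
def qHermite (q : k) (y h : A) (m : ℕ) : A :=
  ∑ p ∈ antidiagonal m, qChoose q m p.1 • (y ^ p.1 * qMoment q h p.2)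

lemma qHermite_zero (q : k) (y h : A) : qHermite q y h 0 = 1 := by simp [qHermite, qMoment]

/-- Gaussian integration by parts: raising the moment by one amounts to `q`-differentiating the
power of `y`. -/
lemma sum_qChoose_smul_qMoment_succ (q : k) (y h : A) (m : ℕ) :
    ∑ p ∈ antidiagonal m, qChoose q m p.1 • q ^ p.1 • (y ^ p.1 * qMoment q h (p.2 + 1)) =
      ∑ p ∈ antidiagonal m,
        qChoose q m p.1 • (q ^ (p.1 - 1) * qInt q p.1) •
          (y ^ (p.1 - 1) * (h * qMoment q h p.2)) := by
  cases m with
  | zero => simp [qMoment]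
  | succ m =>
    rw [Nat.sum_antidiagonal_succ', Nat.sum_antidiagonal_succ]
    simp only [qMoment, mul_zero, smul_zero, zero_add, qInt_zero, zero_smul,
      Nat.add_sub_cancel]
    refine sum_congr rfl fun p hp => ?_
    obtain ⟨r, u⟩ := p
    obtain rfl : r + u = m := HasAntidiagonal.mem_antidiagonal.mp hp
    have absorption : qInt q (u + 1) * qChoose q (r + u + 1) r =
        qInt q (r + 1) * qChoose q (r + u + 1) (r + 1) := by
      rw [qInt_succ_mul_qChoose_add_succ, qInt_succ_mul_qChoose_succ_succ]
    simp only [mul_smul_comm, smul_smul]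
    congr 1
    linear_combination q ^ r * absorption

lemma add_mul_qHermite {q : k} {x y h : A} (hxy : x * y = q • (y * x) + h)
    (hxh : x * h = q ^ 2 • (h * x)) (hhy : h * y = q ^ 2 • (y * h)) (m : ℕ) :
    (x + y) * qHermite q y h m = qHermite q y h (m + 1) + q ^ m • (qHermite q y h m * x) := by
  have normal_order (r u : ℕ) : (x + y) * (y ^ r * qMoment q h u) =
      y ^ (r + 1) * qMoment q h u +
        (q ^ (r - 1) * qInt q r) • (y ^ (r - 1) * (h * qMoment q h u)) +
        q ^ (r + u) • (y ^ r * qMoment q h u * x) := by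
    rw [add_mul, ← mul_assoc x, mul_pow_eq_of_q_commute hxy hhy, add_mul, smul_mul_assoc,
      smul_mul_assoc, mul_assoc _ x, mul_qMoment hxh, mul_smul_comm, pow_succ' y]
    simp only [mul_assoc]
    module
  have succ_eq : qHermite q y h (m + 1) = ∑ p ∈ antidiagonal m, qChoose q m p.1 •
      (y ^ (p.1 + 1) * qMoment q h p.2 +
        (q ^ (p.1 - 1) * qInt q p.1) • (y ^ (p.1 - 1) * (h * qMoment q h p.2))) := by
    rw [qHermite, sum_antidiagonal_qChoose_succ_smul q (fun r u => y ^ r * qMoment q h u)]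
    simp only [smul_add, sum_add_distrib, sum_qChoose_smul_qMoment_succ]
  rw [succ_eq, qHermite, mul_sum, sum_mul, smul_sum, ← sum_add_distrib]
  refine sum_congr rfl fun p hp => ?_
  rw [mul_smul_comm, normal_order, HasAntidiagonal.mem_antidiagonal.mp hp, smul_add, smul_mul_assoc,
    smul_comm (q ^ m)]

lemma sum_qChoose_smul_qHermite_mul_pow (q : k) (x y h : A) (n : ℕ) :
    ∑ p ∈ antidiagonal n, qChoose q n p.1 • (qHermite q y h p.1 * x ^ p.2) =
      ∑ᶠ p ∈ {p : ℕ × ℕ × ℕ | p.1 + 2 * p.2.1 + p.2.2 = n},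
        qPairingCoeff q p.1 p.2.1 p.2.2 • (y ^ p.1 * h ^ p.2.1 * x ^ p.2.2) := by
  let summand (r u t : ℕ) : A :=
    (qChoose q n (r + u) * qChoose q (r + u) r) • (y ^ r * qMoment q h u * x ^ t)
  have summand_odd (r s t : ℕ) : summand r (2 * s + 1) t = 0 := by
    simp only [summand, qMoment_two_mul_add_one, mul_zero, zero_mul, smul_zero]
  calc ∑ p ∈ antidiagonal n, qChoose q n p.1 • (qHermite q y h p.1 * x ^ p.2)
      = ∑ p ∈ antidiagonal n, ∑ d ∈ antidiagonal p.1, summand d.1 d.2 p.2 := by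
        refine sum_congr rfl fun p _ => ?_
        rw [qHermite, sum_mul, smul_sum]
        refine sum_congr rfl fun d hd => ?_
        simp only [summand, HasAntidiagonal.mem_antidiagonal.mp hd, smul_mul_assoc, smul_smul]
    _ = ∑ᶠ p ∈ {p : ℕ × ℕ × ℕ | p.1 + 2 * p.2.1 + p.2.2 = n}, summand p.1 (2 * p.2.1) p.2.2 :=
        sum_antidiagonal_antidiagonal_eq_finsum_of_odd_eq_zero n summand summand_odd
    _ = _ := by
        refine finsum_mem_congr rfl ?_
        rintro p rfl
        simp only [summand, qPairingCoeff, qMoment_two_mul, mul_smul_comm, smul_mul_assoc,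
          smul_smul]

end NormalOrdering

theorem stmt_16_general {k A : Type*} [CommRing k] [Ring A] [Algebra k A]
    (q : k) (n : ℕ) (x y h : A)
    (hxy : x * y = q • (y * x) + h)
    (hxh : x * h = q ^ 2 • (h * x))
    (hhy : h * y = q ^ 2 • (y * h)) :
    (x + y) ^ n =
      ∑ᶠ p ∈ {p : ℕ × ℕ × ℕ | p.1 + 2 * p.2.1 + p.2.2 = n},
        qPairingCoeff q p.1 p.2.1 p.2.2 • (y ^ p.1 * h ^ p.2.1 * x ^ p.2.2) :=
  (pow_eq_sum_qChoose_smul (qHermite_zero q y h) (add_mul_qHermite hxy hxh hhy) n).trans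
    (sum_qChoose_smul_qHermite_mul_pow q x y h n)

/-- Blumen's q-binomial formula: if `x·y = q·y·x + h`, `x·h = q²·h·x`,
`h·y = q²·y·h`, then `(x+y)^n = Σ_{r+2s+t=n} (n)_q!/((r)_q!(2)_q^s(s)_{q²}!(t)_q!)
y^r h^s x^t`. -/
theorem stmt_16 {k A : Type*} [Field k] [Ring A] [Algebra k A]
    (q : k) (n : ℕ) (hn : 1 ≤ n)
    (hq : ∀ m : ℕ, 1 ≤ m → m ≤ n → qInt q m ≠ 0)
    (x y h : A)
    (hxy : x * y = q • (y * x) + h)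
    (hxh : x * h = q ^ 2 • (h * x))
    (hhy : h * y = q ^ 2 • (y * h)) :
    (x + y) ^ n =
      ∑ᶠ p ∈ {p : ℕ × ℕ × ℕ | p.1 + 2 * p.2.1 + p.2.2 = n},
        (qFact q n /
            (qFact q p.1 * qInt q 2 ^ p.2.1 * qFact (q ^ 2) p.2.1 * qFact q p.2.2)) •
          (y ^ p.1 * h ^ p.2.1 * x ^ p.2.2) := by
  refine (stmt_16_general q n x y h hxy hxh hhy).trans (finsum_mem_congr rfl ?_)
  rintro p rfl
  rw [qPairingCoeff_eq_div (qFact_ne_zero hq)]
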